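/- arXiv:1706.04436 — 2 statements merged into one kernel-verified Lean document; each statement's English description precedes it below -/
import Mathlib

section
/- Let A be a Banach algebra, X a compact Hausdorff space, σ ∈ Hom(A). If A has a σ-bounded approximate diagonal, then C(X,A) has a σ̃-bounded approximate diagonal, where σ̃(f) = σ ∘ f. -/
/-!
Heuristically `C(X, A)` is `C(X) ⊗ A`, and an approximate diagonal for it is obtained by combining
the given one for `A` with the classical one for `C(X)`: Følner averages of `g ⊗ g⁻¹` over the
abelian, hence amenable, group of unitaries `g : X → 𝕋`.

For `u` in `A ⊗ A` and a circle-valued `g`, let `spread g g⁻¹ u` be the image of `u` under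
`a ⊗ b ↦ (g a) ⊗ (g⁻¹ b)`; this does not increase the projective norm. The new net, indexed by
triples `(v, S, n)` with `S` a finite set of unitaries, averages `spread g g⁻¹ u_v` over `g` with a
mean that is `2 / (n + 1)`-almost invariant under translation by `S` (`exists_folner_mean`). Its
product is the constant function `π(u_v)`. Its commutator with `h ⊗ σ a`, where `h ∈ S`, splits into
an average of images of the commutator of `u_v` with `σ a`, and a translation defect of norm
`O(1 / n)` (`projSeminorm_outerComm_mean_le`). Both conditions therefore hold on the functions
`h ⊗ a`. These span a dense subspace (`dense_span_unitaryTensor`), and boundedness of the net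
extends the conditions to all of `C(X, A)` (`tendsto_diag_of_dense_span`).
-/

open scoped TensorProduct

/-- The projective tensor seminorm on the algebraic tensor product `B ⊗ B`:
the infimum of `∑ ‖aᵢ‖‖bᵢ‖` over all representations `u = ∑ aᵢ ⊗ bᵢ`. -/
noncomputable def projNorm (B : Type*) [NonUnitalNormedRing B] [NormedSpace ℂ B]
    (u : B ⊗[ℂ] B) : ℝ :=
  sInf {r : ℝ | ∃ (n : ℕ) (a b : Fin n → B),
    u = ∑ i, a i ⊗ₜ[ℂ] b i ∧ r = ∑ i, ‖a i‖ * ‖b i‖}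

/-- `s`-bounded approximate diagonal: a bounded net `(u_v)` in `B ⊗̂ B` with
`s(b)·u_v − u_v·s(b) → 0` and `π(u_v) s(b) → s(b)` for all `b ∈ B`, where
`π` is the multiplication map and the bimodule actions act on the outer factors. -/
def HasSigmaBoundedApproxDiagonal (B : Type u) [NonUnitalNormedRing B]
    [NormedSpace ℂ B] [IsScalarTower ℂ B B] [SMulCommClass ℂ B B]
    (s : B → B) : Prop :=
  ∃ (ι : Type u) (_ : Nonempty ι) (pre : Preorder ι) (_ : IsDirected ι pre.le)
    (uu : ι → B ⊗[ℂ] B),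
    (∃ M : ℝ, ∀ v, projNorm B (uu v) ≤ M) ∧
    ∀ b : B,
      Filter.Tendsto (fun v => projNorm B
          (TensorProduct.map (LinearMap.mulLeft ℂ (s b)) LinearMap.id (uu v)
            - TensorProduct.map LinearMap.id (LinearMap.mulRight ℂ (s b)) (uu v)))
        (@Filter.atTop ι pre) (nhds 0) ∧
      Filter.Tendsto (fun v => TensorProduct.lift (LinearMap.mul ℂ B) (uu v) * s b)
        (@Filter.atTop ι pre) (nhds (s b))

/-! ### The projective norm as a seminorm -/

section
variable {B : Type*} [NonUnitalNormedRing B] [NormedSpace ℂ B]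

theorem exists_repr (u : B ⊗[ℂ] B) : ∃ (n : ℕ) (a b : Fin n → B), u = ∑ i, a i ⊗ₜ[ℂ] b i := by
  induction u with
  | zero => exact ⟨0, Fin.elim0, Fin.elim0, by simp⟩
  | tmul x y => exact ⟨1, fun _ => x, fun _ => y, by simp⟩
  | add u v hu hv =>
    obtain ⟨n, a, b, rfl⟩ := hu
    obtain ⟨m, c, d, rfl⟩ := hv
    exact ⟨n + m, Fin.append a c, Fin.append b d, by simp [Fin.sum_univ_add]⟩

theorem projNorm_le_sum {n : ℕ} (a b : Fin n → B) :
    projNorm B (∑ i, a i ⊗ₜ[ℂ] b i) ≤ ∑ i, ‖a i‖ * ‖b i‖ := by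
  refine csInf_le ⟨0, ?_⟩ ⟨n, a, b, rfl, rfl⟩
  rintro r ⟨n, a, b, -, rfl⟩
  positivity

theorem le_projNorm {u : B ⊗[ℂ] B} {C : ℝ}
    (h : ∀ (n : ℕ) (a b : Fin n → B), u = ∑ i, a i ⊗ₜ[ℂ] b i → C ≤ ∑ i, ‖a i‖ * ‖b i‖) :
    C ≤ projNorm B u := by
  obtain ⟨n, a, b, hu⟩ := exists_repr u
  refine le_csInf ⟨_, n, a, b, hu, rfl⟩ ?_
  rintro r ⟨n, a, b, hu, rfl⟩
  exact h n a b hu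

theorem projNorm_nonneg (u : B ⊗[ℂ] B) : 0 ≤ projNorm B u :=
  le_projNorm fun _ _ _ _ => by positivity

theorem projNorm_add_le (u v : B ⊗[ℂ] B) :
    projNorm B (u + v) ≤ projNorm B u + projNorm B v := by
  rw [← sub_le_iff_le_add]
  refine le_projNorm fun n a b hu => ?_
  rw [sub_le_iff_le_add, ← sub_le_iff_le_add']
  refine le_projNorm fun m c d hv => ?_
  rw [sub_le_iff_le_add']
  have := projNorm_le_sum (Fin.append a c) (Fin.append b d)
  simpa [Fin.sum_univ_add, ← hu, ← hv] using this

/-- Operators `S`, `T` of norm at most `s`, `t` induce a map of projective norm at most `s * t`. -/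
theorem projNorm_map_le {B' : Type*} [NonUnitalNormedRing B'] [NormedSpace ℂ B']
    (S T : B →ₗ[ℂ] B') {s t : ℝ} (hs : 0 ≤ s) (ht : 0 ≤ t)
    (hS : ∀ b, ‖S b‖ ≤ s * ‖b‖) (hT : ∀ b, ‖T b‖ ≤ t * ‖b‖) (u : B ⊗[ℂ] B) :
    projNorm B' (TensorProduct.map S T u) ≤ s * t * projNorm B u := by
  have key : ∀ (n : ℕ) (a b : Fin n → B), u = ∑ i, a i ⊗ₜ[ℂ] b i →
      projNorm B' (TensorProduct.map S T u) ≤ s * t * ∑ i, ‖a i‖ * ‖b i‖ := by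
    rintro n a b rfl
    simp only [map_sum, TensorProduct.map_tmul]
    refine (projNorm_le_sum _ _).trans ?_
    rw [Finset.mul_sum]
    refine Finset.sum_le_sum fun i _ => ?_
    calc ‖S (a i)‖ * ‖T (b i)‖ ≤ (s * ‖a i‖) * (t * ‖b i‖) := by
          gcongr
          · exact hS _
          · exact hT _
      _ = _ := by ring
  rcases (mul_nonneg hs ht).eq_or_lt with h0 | h0
  · obtain ⟨n, a, b, hu⟩ := exists_repr u
    simpa [← h0] using key n a b hu
  · rw [← div_le_iff₀' h0]
    exact le_projNorm fun n a b hu => (div_le_iff₀' h0).2 (key n a b hu)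

/-- The projective norm, bundled as a seminorm on the algebraic tensor product. -/
noncomputable def projSeminorm (B : Type*) [NonUnitalNormedRing B] [NormedSpace ℂ B] :
    Seminorm ℂ (B ⊗[ℂ] B) :=
  Seminorm.ofSMulLE (projNorm B)
    (le_antisymm (by simpa using projNorm_le_sum (B := B) (n := 0) Fin.elim0 Fin.elim0)
      (projNorm_nonneg _))
    projNorm_add_le
    (fun c u => by
      have := projNorm_map_le (c • (LinearMap.id : B →ₗ[ℂ] B)) LinearMap.id (norm_nonneg c)
        zero_le_one (fun b => by simp [norm_smul]) (fun b => by simp) u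
      simpa [TensorProduct.map_smul_left] using this)

theorem projSeminorm_apply (u : B ⊗[ℂ] B) : projSeminorm B u = projNorm B u := rfl

variable [IsScalarTower ℂ B B] [SMulCommClass ℂ B B]

theorem norm_lift_mul_le (u : B ⊗[ℂ] B) :
    ‖TensorProduct.lift (LinearMap.mul ℂ B) u‖ ≤ projNorm B u := by
  refine le_projNorm ?_
  rintro n a b rfl
  simp only [map_sum, TensorProduct.lift.tmul, LinearMap.mul_apply']
  exact norm_sum_le_of_le _ fun i _ => norm_mul_le _ _

/-- The defect `π(u) b - b` of `u` as a left unit, linearly in `b`. -/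
noncomputable def unitDefect (u : B ⊗[ℂ] B) : B →ₗ[ℂ] B :=
  LinearMap.mulLeft ℂ (TensorProduct.lift (LinearMap.mul ℂ B) u) - LinearMap.id

theorem unitDefect_apply (u : B ⊗[ℂ] B) (b : B) :
    unitDefect u b = TensorProduct.lift (LinearMap.mul ℂ B) u * b - b := rfl

theorem normSeminorm_unitDefect_le (u : B ⊗[ℂ] B) (b : B) :
    normSeminorm ℂ B (unitDefect u b) ≤ (projNorm B u + 1) * ‖b‖ := by
  rw [coe_normSeminorm, unitDefect_apply]
  calc _ ≤ ‖TensorProduct.lift (LinearMap.mul ℂ B) u‖ * ‖b‖ + ‖b‖ :=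
        (norm_sub_le _ _).trans (by gcongr; exact norm_mul_le _ _)
    _ ≤ projNorm B u * ‖b‖ + ‖b‖ := by
        gcongr
        exact norm_lift_mul_le u
    _ = _ := by ring

/-- The commutator `b · u - u · b` for the outer bimodule action, linearly in `b`. -/
noncomputable def outerComm (u : B ⊗[ℂ] B) : B →ₗ[ℂ] B ⊗[ℂ] B where
  toFun b := TensorProduct.map (LinearMap.mulLeft ℂ b) LinearMap.id u
    - TensorProduct.map LinearMap.id (LinearMap.mulRight ℂ b) u
  map_add' b c := by
    have h1 : LinearMap.mulLeft ℂ (b + c) = LinearMap.mulLeft ℂ b + LinearMap.mulLeft ℂ c := by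
      ext x; simp [add_mul]
    have h2 : LinearMap.mulRight ℂ (b + c) = LinearMap.mulRight ℂ b + LinearMap.mulRight ℂ c := by
      ext x; simp [mul_add]
    rw [h1, h2, TensorProduct.map_add_left, TensorProduct.map_add_right]
    simp only [LinearMap.add_apply]
    abel
  map_smul' c b := by
    have h1 : LinearMap.mulLeft ℂ (c • b) = c • LinearMap.mulLeft ℂ b := by
      ext x; exact smul_mul_assoc c b x
    have h2 : LinearMap.mulRight ℂ (c • b) = c • LinearMap.mulRight ℂ b := by
      ext x; exact mul_smul_comm c x b
    rw [h1, h2, TensorProduct.map_smul_left, TensorProduct.map_smul_right]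
    simp [smul_sub]

omit [SMulCommClass ℂ B B] in
theorem projNorm_mulRight_le (u : B ⊗[ℂ] B) (b : B) :
    projNorm B (TensorProduct.map LinearMap.id (LinearMap.mulRight ℂ b) u)
      ≤ ‖b‖ * projNorm B u := by
  have := projNorm_map_le LinearMap.id (LinearMap.mulRight ℂ b) zero_le_one (norm_nonneg b)
    (fun x => by simp) (fun x => by simpa [mul_comm] using norm_mul_le x b) u
  simpa using this

theorem projSeminorm_outerComm_le (u : B ⊗[ℂ] B) (b : B) :
    projSeminorm B (outerComm u b) ≤ 2 * projNorm B u * ‖b‖ := by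
  have h1 : projNorm B (TensorProduct.map (LinearMap.mulLeft ℂ b) LinearMap.id u)
      ≤ ‖b‖ * projNorm B u := by
    have := projNorm_map_le (LinearMap.mulLeft ℂ b) LinearMap.id (norm_nonneg b) zero_le_one
      (fun x => by simpa using norm_mul_le b x) (fun x => by simp) u
    simpa using this
  refine (map_sub_le_add (projSeminorm B) _ _).trans ?_
  simp only [projSeminorm_apply]
  linarith [projNorm_mulRight_le u b]

end

/-! ### Reduction to a set with dense span -/

/-- An equibounded net of linear maps tending to `0` on a set with dense span tends to `0`
everywhere. -/
theorem tendsto_of_dense_span {ι B W : Type*} [SeminormedAddCommGroup B] [NormedSpace ℂ B]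
    [AddCommGroup W] [Module ℂ W] (l : Filter ι) (p : Seminorm ℂ W) (F : ι → B →ₗ[ℂ] W) (K : ℝ)
    (hK : ∀ i b, p (F i b) ≤ K * ‖b‖) (D : Set B) (hD : Dense (Submodule.span ℂ D : Set B))
    (h : ∀ d ∈ D, Filter.Tendsto (fun i => p (F i d)) l (nhds 0)) (b : B) :
    Filter.Tendsto (fun i => p (F i b)) l (nhds 0) := by
  have hspan : ∀ d ∈ Submodule.span ℂ D, Filter.Tendsto (fun i => p (F i d)) l (nhds 0) := by
    intro d hd
    induction hd using Submodule.span_induction with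
    | mem x hx => exact h x hx
    | zero => simpa using tendsto_const_nhds
    | add x y _ _ hx hy =>
      refine squeeze_zero (fun _ => apply_nonneg _ _) (fun i => ?_) (by simpa using hx.add hy)
      rw [map_add]
      exact map_add_le_add _ _ _
    | smul c x _ hx =>
      simp only [map_smul, map_smul_eq_mul]
      simpa using hx.const_mul ‖c‖
  rw [Metric.tendsto_nhds]
  intro ε hε
  obtain ⟨d, hd, hbd⟩ := Metric.dense_iff.1 hD b (ε / (2 * (|K| + 1))) (by positivity)
  rw [Metric.mem_ball, dist_comm, dist_eq_norm] at hd
  filter_upwards [(Metric.tendsto_nhds.1 (hspan d hbd)) (ε / 2) (by positivity)] with i hi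
  rw [Real.dist_0_eq_abs, abs_of_nonneg (apply_nonneg _ _)] at hi ⊢
  have h1 : p (F i b) ≤ p (F i (b - d)) + p (F i d) := by
    have := map_add_le_add p (F i (b - d)) (F i d)
    rwa [← map_add, sub_add_cancel] at this
  have h2 : K * ‖b - d‖ ≤ ε / 2 := by
    rw [lt_div_iff₀ (by positivity)] at hd
    nlinarith [le_abs_self K, norm_nonneg (b - d)]
  linarith [hK i (b - d)]

/-- For a bounded net in `B ⊗ B`, both conditions on a `s`-approximate diagonal need only be
checked on a set with dense span. -/
theorem tendsto_diag_of_dense_span {ι B : Type*} [NonUnitalNormedRing B] [NormedSpace ℂ B]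
    [IsScalarTower ℂ B B] [SMulCommClass ℂ B B] (l : Filter ι) (w : ι → B ⊗[ℂ] B) {M : ℝ}
    (hM0 : 0 ≤ M) (hw : ∀ v, projNorm B (w v) ≤ M) (s : B →L[ℂ] B) (D : Set B)
    (hD : Dense (Submodule.span ℂ D : Set B))
    (h1 : ∀ d ∈ D, Filter.Tendsto (fun v => projNorm B (outerComm (w v) (s d))) l (nhds 0))
    (h2 : ∀ d ∈ D, Filter.Tendsto (fun v => ‖unitDefect (w v) (s d)‖) l (nhds 0)) (b : B) :
    Filter.Tendsto (fun v => projNorm B (outerComm (w v) (s b))) l (nhds 0) ∧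
      Filter.Tendsto (fun v => TensorProduct.lift (LinearMap.mul ℂ B) (w v) * s b) l
        (nhds (s b)) := by
  constructor
  · refine tendsto_of_dense_span l (projSeminorm B)
      (fun v => outerComm (w v) ∘ₗ (s : B →ₗ[ℂ] B)) (2 * M * ‖s‖) (fun v b => ?_) D hD h1 b
    calc projSeminorm B (outerComm (w v) (s b))
        ≤ 2 * projNorm B (w v) * ‖s b‖ := projSeminorm_outerComm_le _ _
      _ ≤ 2 * M * (‖s‖ * ‖b‖) := by
        gcongr
        · exact hw v
        · exact s.le_opNorm b
      _ = _ := by ring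
  · rw [tendsto_iff_norm_sub_tendsto_zero]
    refine tendsto_of_dense_span l (normSeminorm ℂ B)
      (fun v => unitDefect (w v) ∘ₗ (s : B →ₗ[ℂ] B)) ((M + 1) * ‖s‖) (fun v b => ?_) D hD h2 b
    calc normSeminorm ℂ B (unitDefect (w v) (s b))
        ≤ (projNorm B (w v) + 1) * ‖s b‖ := normSeminorm_unitDefect_le _ _
      _ ≤ (M + 1) * (‖s‖ * ‖b‖) := by
        gcongr
        · exact hw v
        · exact s.le_opNorm b
      _ = _ := by ring

/-! ### Almost invariant means -/

/-- Følner averages: on `V`-valued functions on a commutative group `G` there is, for every finite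
`S ⊆ G` and `n`, a contractive averaging operator, compatible with linear maps on `V`, that is
`2 / (n + 1)`-almost invariant under translation by the elements of `S`. -/
theorem exists_folner_mean {G V W : Type*} [CommGroup G] [AddCommGroup V] [Module ℂ V]
    [AddCommGroup W] [Module ℂ W]
    (p : Seminorm ℂ V) (n : ℕ) (S : Finset G) :
    ∃ L : (G → V) →ₗ[ℂ] V,
      (∀ (φ : G → V) (C : ℝ), (∀ g, p (φ g) ≤ C) → p (L φ) ≤ C) ∧
      (∀ h ∈ S, ∀ (φ : G → V) (C : ℝ), (∀ g, p (φ g) ≤ C) →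
        p (L (fun g => φ (h * g) - φ g)) ≤ 2 * C / (n + 1)) ∧
      (∀ (T : V →ₗ[ℂ] V) (φ : G → V), T (L φ) = L (fun g => T (φ g))) ∧
      (∀ (T : V →ₗ[ℂ] W) (φ : G → V) (w : W), (∀ g, T (φ g) = w) → T (L φ) = w) := by
  classical
  induction S using Finset.induction_on with
  | empty =>
    exact ⟨LinearMap.proj 1, fun φ C h => h 1, by simp, fun T φ => rfl, fun T φ w h => h 1⟩
  | insert h S _ ih =>
    obtain ⟨L, h1, h2, h3, h4⟩ := ih
    have hn : (n : ℝ) + 1 > 0 := by positivity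
    have hnC : ((n : ℂ) + 1) ≠ 0 := Nat.cast_add_one_ne_zero n
    have hnorm : ‖((n : ℂ) + 1)⁻¹‖ = ((n : ℝ) + 1)⁻¹ := by
      rw [norm_inv]; congr 1; exact_mod_cast Complex.norm_natCast (n + 1)
    -- average `L` further over the translates by `1, h, …, h ^ n`
    let L' : (G → V) →ₗ[ℂ] V := ((n : ℂ) + 1)⁻¹ • ∑ k ∈ Finset.range (n + 1),
      L ∘ₗ LinearMap.funLeft ℂ V (fun g => h ^ k * g)
    have hL' : ∀ φ, L' φ = ((n : ℂ) + 1)⁻¹ • ∑ k ∈ Finset.range (n + 1),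
        L (fun g => φ (h ^ k * g)) := by
      intro φ
      simp only [L', LinearMap.smul_apply, LinearMap.sum_apply, LinearMap.comp_apply]
      rfl
    have hb : ∀ (φ : G → V) (C : ℝ), (∀ k, p (L (fun g => φ (h ^ k * g))) ≤ C) →
        p (L' φ) ≤ C := by
      intro φ C hC
      rw [hL', map_smul_eq_mul, hnorm, inv_mul_le_iff₀ hn]
      refine (Finset.le_sum_of_subadditive p (map_zero p).le (map_add_le_add p) _ _).trans ((Finset.sum_le_sum fun k _ => hC k).trans ?_)
      simp
    refine ⟨L', fun φ C hC => hb φ C fun k => h1 _ _ fun g => hC _, ?_, ?_, ?_⟩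
    · intro h' hh' φ C hC
      rcases Finset.mem_insert.1 hh' with rfl | hh'
      ·
        -- the sum over the powers of the translating element telescopes
        have : L' (fun g => φ (h' * g) - φ g) = ((n : ℂ) + 1)⁻¹ •
            (L (fun g => φ (h' ^ (n + 1) * g)) - L φ) := by
          rw [hL']
          congr 1
          have := Finset.sum_range_sub (fun k => L (fun g => φ (h' ^ k * g))) (n + 1)
          simp only [pow_zero, one_mul] at this
          rw [← this]
          refine Finset.sum_congr rfl fun k _ => ?_
          rw [← map_sub]
          congr 1
          ext g
          simp [pow_succ', mul_assoc]
        rw [this, map_smul_eq_mul, hnorm, inv_mul_le_iff₀ hn, mul_div_cancel₀ _ hn.ne']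
        refine (map_sub_le_add p _ _).trans ?_
        linarith [h1 (fun g => φ (h' ^ (n + 1) * g)) C fun g => hC _, h1 φ C hC]
      · refine hb _ _ fun k => ?_
        have := h2 h' hh' (fun g => φ (h ^ k * g)) C fun g => hC _
        simpa only [mul_left_comm] using this
    · intro T φ
      rw [hL', hL']
      simp only [map_smul, map_sum, h3]
    · intro T φ w hw
      rw [hL']
      simp only [map_smul, map_sum]
      rw [Finset.sum_congr rfl fun k _ => h4 T (fun g => φ (h ^ k * g)) w fun g => hw _]
      rw [Finset.sum_const, Finset.card_range, ← Nat.cast_smul_eq_nsmul ℂ, smul_smul]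
      push_cast
      rw [inv_mul_cancel₀ hnC, one_smul]

/-! ### Unitaries of `C(X, ℂ)` acting on `A ⊗ A` -/

section
variable {X A : Type*} [TopologicalSpace X] [CompactSpace X]
  [NonUnitalNormedRing A] [NormedSpace ℂ A]

/-- The embedding `a ↦ g ⊗ a`, i.e. `x ↦ g x • a`, of `A` into `C(X, A)` attached to a unitary
`g` of `C(X, ℂ)`, encoded as a circle-valued function. -/
noncomputable def unitaryTensor (g : C(X, Circle)) : A →ₗ[ℂ] C(X, A) where
  toFun a := ⟨fun x => (g x : ℂ) • a, by fun_prop⟩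
  map_add' a b := by ext x; simp
  map_smul' c a := by ext x; exact smul_comm _ _ _

omit [CompactSpace X] in
@[simp] theorem unitaryTensor_apply (g : C(X, Circle)) (a : A) (x : X) :
    unitaryTensor g a x = (g x : ℂ) • a := rfl

theorem norm_unitaryTensor_le (g : C(X, Circle)) (a : A) :
    ‖unitaryTensor g a‖ ≤ 1 * ‖a‖ := by
  refine (ContinuousMap.norm_le _ (by positivity)).2 fun x => ?_
  rw [unitaryTensor_apply, norm_smul, Circle.norm_coe]

/-- The elements `g ⊗ a` span a dense subspace: approximate by means of partitions of unity, and
write a function `ρ : X → [0, 1]` as the mean of the unitaries `exp (± i arccos ρ)`. -/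
theorem dense_span_unitaryTensor [T2Space X] :
    Dense (Submodule.span ℂ {f : C(X, A) | ∃ g a, f = unitaryTensor g a} : Set C(X, A)) := by
  set V := Submodule.span ℂ {f : C(X, A) | ∃ g a, f = unitaryTensor g a} with hV
  have hmem : ∀ (ρ : C(X, ℝ)) (_ : ∀ x, 0 ≤ ρ x) (_ : ∀ x, ρ x ≤ 1) (a : A) (F : C(X, A))
      (_ : ∀ x, F x = (ρ x : ℂ) • a), F ∈ V := by
    intro ρ h0 h1 a F hF
    let g : C(X, Circle) := ⟨fun x => Circle.exp (Real.arccos (ρ x)), by fun_prop⟩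
    have : F = (2⁻¹ : ℂ) • (unitaryTensor g a + unitaryTensor g⁻¹ a) := by
      ext x
      simp only [hF, ContinuousMap.smul_apply, ContinuousMap.add_apply, unitaryTensor_apply,
        ← add_smul, smul_smul]
      congr 1
      simp only [ContinuousMap.inv_apply, g, ContinuousMap.coe_mk, ← Circle.exp_neg,
        Circle.coe_exp]
      have := Complex.two_cos (Real.arccos (ρ x) : ℂ)
      rw [Complex.ofReal_neg, ← this, ← Complex.ofReal_cos,
        Real.cos_arccos (by linarith [h0 x]) (h1 x)]
      ring
    rw [this]
    exact V.smul_mem _ (V.add_mem (Submodule.subset_span ⟨g, a, rfl⟩)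
      (Submodule.subset_span ⟨g⁻¹, a, rfl⟩))
  refine Metric.dense_iff.2 fun f ε hε => ?_
  obtain ⟨t, ht⟩ := isCompact_univ.elim_finite_subcover
    (fun x : X => f ⁻¹' Metric.ball (f x) (ε / 2))
    (fun x => Metric.isOpen_ball.preimage f.continuous)
    (fun x _ => Set.mem_iUnion.2 ⟨x, by simp [hε]⟩)
  obtain ⟨ρ, hρ⟩ := PartitionOfUnity.exists_isSubordinate (s := (Set.univ : Set X)) isClosed_univ
    (fun i : t => f ⁻¹' Metric.ball (f i) (ε / 2))
    (fun x => Metric.isOpen_ball.preimage f.continuous)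
    (by simpa [Set.iUnion_subtype] using ht)
  -- `∑ i, ρ i • f (i)` is within `ε / 2` of `f`
  let F : t → C(X, A) := fun i => ⟨fun x => (ρ i x : ℂ) • f i, by fun_prop⟩
  refine ⟨∑ i, F i, ?_, V.sum_mem fun i _ =>
    hmem (ρ i) (ρ.nonneg i) (ρ.le_one i) (f i) (F i) fun x => rfl⟩
  rw [Metric.mem_ball, dist_eq_norm]
  refine lt_of_le_of_lt ?_ (half_lt_self hε)
  refine (ContinuousMap.norm_le _ (by positivity)).2 fun x => ?_
  have hsum : ∑ i, ρ i x = 1 := by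
    rw [← finsum_eq_sum_of_fintype]; exact ρ.sum_eq_one (Set.mem_univ x)
  have hsumC : ∑ i, (ρ i x : ℂ) = 1 := by exact_mod_cast hsum
  have h1 : (∑ i, F i - f) x = ∑ i, (ρ i x : ℂ) • (f i - f x) := by
    simp only [smul_sub, Finset.sum_sub_distrib, ← Finset.sum_smul, hsumC, one_smul]
    simp [F]
  rw [h1]
  calc ‖∑ i, (ρ i x : ℂ) • (f i - f x)‖ ≤ ∑ i, ρ i x * (ε / 2) := by
        refine norm_sum_le_of_le _ fun i _ => ?_
        rw [norm_smul, Complex.norm_real, Real.norm_of_nonneg (ρ.nonneg i x)]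
        by_cases hx : ρ i x = 0
        · simp [hx]
        · have : x ∈ f ⁻¹' Metric.ball (f i) (ε / 2) := hρ i (subset_tsupport _ hx)
          rw [Set.mem_preimage, Metric.mem_ball, dist_comm, dist_eq_norm] at this
          exact mul_le_mul_of_nonneg_left this.le (ρ.nonneg i x)
    _ = ε / 2 := by rw [← Finset.sum_mul, hsum, one_mul]

/-- The map `A ⊗ A → C(X, A) ⊗ C(X, A)`, `a ⊗ b ↦ (g₁ ⊗ a) ⊗ (g₂ ⊗ b)`. -/
noncomputable def spread (g₁ g₂ : C(X, Circle)) : A ⊗[ℂ] A →ₗ[ℂ] C(X, A) ⊗[ℂ] C(X, A) :=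
  TensorProduct.map (unitaryTensor g₁) (unitaryTensor g₂)

theorem projNorm_spread_le (g₁ g₂ : C(X, Circle)) (u : A ⊗[ℂ] A) :
    projNorm C(X, A) (spread g₁ g₂ u) ≤ projNorm A u := by
  simpa [spread] using projNorm_map_le (unitaryTensor g₁) (unitaryTensor g₂) zero_le_one zero_le_one
    (norm_unitaryTensor_le g₁) (norm_unitaryTensor_le g₂) u

variable [IsScalarTower ℂ A A] [SMulCommClass ℂ A A]

omit [CompactSpace X] in
theorem unitaryTensor_mul (g h : C(X, Circle)) (a b : A) :
    unitaryTensor g a * unitaryTensor h b = unitaryTensor (g * h) (a * b) := by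
  ext x
  simp [smul_mul_smul_comm]

omit [CompactSpace X] in
theorem mulLeft_spread (h g₁ g₂ : C(X, Circle)) (a : A) (u : A ⊗[ℂ] A) :
    TensorProduct.map (LinearMap.mulLeft ℂ (unitaryTensor h a)) LinearMap.id (spread g₁ g₂ u)
      = spread (h * g₁) g₂ (TensorProduct.map (LinearMap.mulLeft ℂ a) LinearMap.id u) := by
  induction u with
  | zero => simp
  | tmul x y => simp [spread, unitaryTensor_mul]
  | add u v hu hv => simp only [map_add, hu, hv]

omit [CompactSpace X] in
theorem mulRight_spread (h g₁ g₂ : C(X, Circle)) (a : A) (u : A ⊗[ℂ] A) :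
    TensorProduct.map LinearMap.id (LinearMap.mulRight ℂ (unitaryTensor h a)) (spread g₁ g₂ u)
      = spread g₁ (g₂ * h) (TensorProduct.map LinearMap.id (LinearMap.mulRight ℂ a) u) := by
  induction u with
  | zero => simp
  | tmul x y => simp [spread, unitaryTensor_mul]
  | add u v hu hv => simp only [map_add, hu, hv]

omit [CompactSpace X] in
theorem lift_mul_spread_inv (g : C(X, Circle)) (u : A ⊗[ℂ] A) :
    TensorProduct.lift (LinearMap.mul ℂ C(X, A)) (spread g g⁻¹ u)
      = unitaryTensor 1 (TensorProduct.lift (LinearMap.mul ℂ A) u) := by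
  induction u with
  | zero => simp
  | tmul x y => simp [spread, unitaryTensor_mul]
  | add u v hu hv => simp only [map_add, hu, hv]

/-- If `L` is contractive and almost invariant under translation by `h`, then the average over `g`
of `spread g g⁻¹ u` almost commutes with `h ⊗ a` as soon as `u` almost commutes with `a`. -/
theorem projSeminorm_outerComm_mean_le (u : A ⊗[ℂ] A) (a : A) (h : C(X, Circle)) (n : ℕ)
    (L : (C(X, Circle) → C(X, A) ⊗[ℂ] C(X, A)) →ₗ[ℂ] C(X, A) ⊗[ℂ] C(X, A))
    (h1 : ∀ (φ : C(X, Circle) → C(X, A) ⊗[ℂ] C(X, A)) (C : ℝ), (∀ g, projSeminorm C(X, A) (φ g) ≤ C) → projSeminorm C(X, A) (L φ) ≤ C)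
    (h2 : ∀ (φ : C(X, Circle) → C(X, A) ⊗[ℂ] C(X, A)) (C : ℝ), (∀ g, projSeminorm C(X, A) (φ g) ≤ C) →
      projSeminorm C(X, A) (L (fun g => φ (h * g) - φ g)) ≤ 2 * C / (n + 1))
    (h3 : ∀ (T : C(X, A) ⊗[ℂ] C(X, A) →ₗ[ℂ] C(X, A) ⊗[ℂ] C(X, A)) φ,
      T (L φ) = L (fun g => T (φ g))) :
    projSeminorm C(X, A) (outerComm (L fun g => spread g g⁻¹ u) (unitaryTensor h a))
      ≤ projNorm A (outerComm u a) + 2 * (‖a‖ * projNorm A u) / (n + 1) := by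
  let T : C(X, A) ⊗[ℂ] C(X, A) →ₗ[ℂ] C(X, A) ⊗[ℂ] C(X, A) :=
    TensorProduct.map (LinearMap.mulLeft ℂ (unitaryTensor h a)) LinearMap.id
      - TensorProduct.map LinearMap.id (LinearMap.mulRight ℂ (unitaryTensor h a))
  let r := TensorProduct.map LinearMap.id (LinearMap.mulRight ℂ a) u
  let ψ : C(X, Circle) → C(X, A) ⊗[ℂ] C(X, A) := fun g => spread g (g⁻¹ * h) r
  -- the commutator splits into a commutator in `A ⊗ A` and a translation defect of `ψ`
  have key : outerComm (L fun g => spread g g⁻¹ u) (unitaryTensor h a)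
      = L (fun g => spread (h * g) g⁻¹ (outerComm u a)) + L (fun g => ψ (h * g) - ψ g) := by
    change T (L _) = _
    rw [h3, ← map_add]
    congr 1
    ext1 g
    have hg : (h * g)⁻¹ * h = g⁻¹ := by simp
    have hT : T (spread g g⁻¹ u)
        = spread (h * g) g⁻¹ (TensorProduct.map (LinearMap.mulLeft ℂ a) LinearMap.id u)
          - spread g (g⁻¹ * h) r := by
      simp only [T, LinearMap.sub_apply, mulLeft_spread, mulRight_spread, r]
    have hc : outerComm u a = TensorProduct.map (LinearMap.mulLeft ℂ a) LinearMap.id u - r := rfl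
    simp only [hT, hc, Pi.add_apply, ψ, hg, map_sub]
    abel
  rw [key]
  refine (map_add_le_add _ _ _).trans (add_le_add (h1 _ _ fun g => projNorm_spread_le _ _ _) ?_)
  exact h2 ψ _ fun g => (projNorm_spread_le _ _ _).trans (projNorm_mulRight_le u a)

end

/-! ### The approximate diagonal of `C(X, A)` -/

/-- if `A` has a `σ`-bounded approximate diagonal, then `C(X,A)`
has a `σ̃`-bounded approximate diagonal, where `σ̃ f = σ ∘ f`. -/
theorem stmt3 {X A : Type u} [TopologicalSpace X] [CompactSpace X] [T2Space X]
    [NonUnitalNormedRing A] [NormedSpace ℂ A] [IsScalarTower ℂ A A]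
    [SMulCommClass ℂ A A] [CompleteSpace A]
    (σ : A →L[ℂ] A) (hσ : ∀ a b : A, σ (a * b) = σ a * σ b)
    (hdiag : HasSigmaBoundedApproxDiagonal A σ) :
    HasSigmaBoundedApproxDiagonal C(X, A)
      (fun f => ContinuousMap.comp ⟨σ, σ.continuous⟩ f) := by
  obtain ⟨ι, hne, pre, hdir, uu, ⟨M, hM⟩, hu⟩ := hdiag
  have hM0 : 0 ≤ M := (projNorm_nonneg _).trans (hM hne.some)
  choose L h1 h2 h3 h4 using fun (S : Finset C(X, Circle)) (n : ℕ) =>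
    exists_folner_mean (W := C(X, A)) (projSeminorm C(X, A)) n S
  let w : ι × Finset C(X, Circle) × ℕ → C(X, A) ⊗[ℂ] C(X, A) :=
    fun v => L v.2.1 v.2.2 fun g => spread g g⁻¹ (uu v.1)
  have hw : ∀ v, projNorm C(X, A) (w v) ≤ M := fun v =>
    h1 _ _ _ _ fun g => (projNorm_spread_le _ _ _).trans (hM _)
  have hπ : ∀ v, TensorProduct.lift (LinearMap.mul ℂ C(X, A)) (w v)
      = unitaryTensor 1 (TensorProduct.lift (LinearMap.mul ℂ A) (uu v.1)) := fun v =>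
    h4 _ _ _ _ _ fun g => lift_mul_spread_inv g _
  let s : C(X, A) →L[ℂ] C(X, A) := σ.compLeftContinuous ℂ X
  have hs : ∀ h a, s (unitaryTensor h a) = unitaryTensor h (σ a) := by
    intro h a; ext x; exact map_smul σ _ _
  have hat : (Filter.atTop : Filter (ι × Finset C(X, Circle) × ℕ))
      = Filter.atTop ×ˢ (Filter.atTop ×ˢ Filter.atTop) := by
    rw [Filter.prod_atTop_atTop_eq, Filter.prod_atTop_atTop_eq]
  have hfst : Filter.Tendsto (Prod.fst : ι × Finset C(X, Circle) × ℕ → ι)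
      Filter.atTop Filter.atTop := by rw [hat]; exact Filter.tendsto_fst
  have hS : Filter.Tendsto (fun v : ι × Finset C(X, Circle) × ℕ => v.2.1)
      Filter.atTop Filter.atTop := by
    rw [hat]; exact Filter.tendsto_fst.comp Filter.tendsto_snd
  have hN : Filter.Tendsto (fun v : ι × Finset C(X, Circle) × ℕ => v.2.2)
      Filter.atTop Filter.atTop := by
    rw [hat]; exact Filter.tendsto_snd.comp Filter.tendsto_snd
  have hdir' : IsDirected (ι × Finset C(X, Circle) × ℕ) (· ≤ ·) := by
    classical
    refine ⟨fun x y => ?_⟩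
    obtain ⟨i, hi⟩ := exists_ge_ge x.1 y.1
    obtain ⟨j, hj⟩ := exists_ge_ge x.2 y.2
    exact ⟨(i, j), ⟨hi.1, hj.1⟩, ⟨hi.2, hj.2⟩⟩
  refine ⟨ι × Finset C(X, Circle) × ℕ, inferInstance, inferInstance, hdir', w,
    ⟨M, hw⟩, tendsto_diag_of_dense_span Filter.atTop w hM0 hw s _ dense_span_unitaryTensor ?_ ?_⟩
  · rintro _ ⟨h, a, rfl⟩
    have hlim : Filter.Tendsto (fun v : ι × Finset C(X, Circle) × ℕ =>
        projNorm A (outerComm (uu v.1) (σ a)) + 2 * (‖σ a‖ * M) / ((v.2.2 : ℝ) + 1))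
        Filter.atTop (nhds 0) := by
      have t1 : Filter.Tendsto (fun v : ι × Finset C(X, Circle) × ℕ =>
          projNorm A (outerComm (uu v.1) (σ a))) Filter.atTop (nhds 0) := (hu a).1.comp hfst
      have t2 := (tendsto_one_div_add_atTop_nhds_zero_nat (𝕜 := ℝ)).comp hN
      simpa [div_eq_mul_inv] using t1.add (t2.const_mul (2 * (‖σ a‖ * M)))
    refine squeeze_zero' (Filter.Eventually.of_forall fun _ => projNorm_nonneg _) ?_ hlim
    filter_upwards [hS.eventually (Filter.eventually_ge_atTop {h})] with v hv
    have hh : h ∈ v.2.1 := hv (Finset.mem_singleton_self h)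
    rw [hs]
    refine (projSeminorm_outerComm_mean_le (uu v.1) (σ a) h v.2.2 _ (h1 _ _)
      (h2 _ _ h hh) (h3 _ _)).trans ?_
    gcongr
    exact hM _
  · rintro _ ⟨h, a, rfl⟩
    refine squeeze_zero (fun _ => norm_nonneg _) (fun v => ?_)
      ((tendsto_iff_norm_sub_tendsto_zero.1 (hu a).2).comp hfst)
    have : unitDefect (w v) (s (unitaryTensor h a))
        = unitaryTensor h (TensorProduct.lift (LinearMap.mul ℂ A) (uu v.1) * σ a - σ a) := by
      rw [unitDefect_apply, hs, hπ, unitaryTensor_mul, one_mul, map_sub]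
    rw [this]
    simpa using norm_unitaryTensor_le h
      (TensorProduct.lift (LinearMap.mul ℂ A) (uu v.1) * σ a - σ a)
end

section
/- Let A be a σ-weakly amenable commutative Banach algebra, I a closed ideal of A, and σ ∈ Hom(A) with dense range such that the closure of σ(I) equals I. Then I is σ|_I-weakly amenable if and only if the linear span of I² is dense in I. -/
/-!
Since `A` is commutative, inner `σ`-derivations vanish, so `σ`-weak amenability of `A` (or of `I`)
says that every bounded `σ`-derivation into the dual is zero.

If the span of `I²` is not dense in `I`, Hahn–Banach gives a functional `g` that kills `I²` but not
`I`; then `x ↦ g x • g` is a nonzero `σ`-derivation `I → I*`.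

Conversely, let `D : I → I*` be a `σ`-derivation and fix `b, c, z ∈ I`. The map `A → A*`,
`a ↦ (x ↦ D (c a) (σ b z x) - D c (σ a σ b z x))`,
is a bounded `σ`-derivation (`derivation_identity`), hence zero. Because `σ(I)` is dense in `I` and
`I²` spans a dense subspace, the elements `σ b z x` with `b, z, x ∈ I` span a dense subspace of `I`
(`eq_zero_of_vanish`, applied twice), which gives `D (c a) = σ a • D c` for `c ∈ I`, `a ∈ A`. For
`a ∈ I` the Leibniz rule now leaves `σ c • D a = 0` for all `c ∈ I`, and density gives `D a = 0`.
-/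

/-- Hahn–Banach: a functional killing the subspace `K` but not a point outside its closure. -/
theorem exists_functional_of_notMem_closure {E : Type*} [NormedAddCommGroup E] [NormedSpace ℂ E]
    (K : Submodule ℂ E) {p : E} (hp : p ∉ closure (K : Set E)) :
    ∃ g : E →L[ℂ] ℂ, (∀ x ∈ K, g x = 0) ∧ g p ≠ 0 := by
  let S := K.topologicalClosure
  have hpS : p ∉ S := hp
  have : IsClosed (S : Set E) := K.isClosed_topologicalClosure
  have h0 : S.mkQL p ≠ 0 := fun h => hpS ((Submodule.Quotient.mk_eq_zero S).1 h)
  obtain ⟨f, hf⟩ := SeparatingDual.exists_ne_zero (R := ℂ) h0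
  refine ⟨f.comp S.mkQL, fun x hx => ?_, hf⟩
  have : S.mkQL x = 0 := (Submodule.Quotient.mk_eq_zero S).2 (K.le_topologicalClosure hx)
  simp [this]

/-- If `σ(I)` is dense in `I` and `I²` spans a dense subspace of `I`, then the products `σ a * b`
with `a, b ∈ I` also span a dense subspace of `I`; this is the dual formulation. -/
theorem eq_zero_of_vanish {A : Type*} [NonUnitalNormedRing A] [NormedSpace ℂ A]
    (σ : A → A) (I : Submodule ℂ A)
    (hI : ∀ a b : A, b ∈ I → a * b ∈ I)
    (hcl : closure (σ '' (I : Set A)) = (I : Set A))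
    (hsp : closure ((Submodule.span ℂ {w : A | ∃ a ∈ I, ∃ b ∈ I, w = a * b} :
        Submodule ℂ A) : Set A) = (I : Set A))
    (f : I →L[ℂ] ℂ)
    (hf : ∀ a b : I, f ⟨σ a * b, hI _ _ b.2⟩ = 0) : f = 0 := by
  obtain ⟨g, hg, -⟩ := exists_extension_norm_eq I f
  have h1 : ∀ b ∈ I, ∀ a ∈ I, g (a * b) = 0 := by
    intro b hb a ha
    have hc : IsClosed {y : A | g (y * b) = 0} :=
      isClosed_eq (by fun_prop) continuous_const
    have hsub : σ '' (I : Set A) ⊆ {y : A | g (y * b) = 0} := by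
      rintro _ ⟨y, hy, rfl⟩
      exact (hg ⟨σ y * b, hI _ _ hb⟩).trans (hf ⟨y, hy⟩ ⟨b, hb⟩)
    have ha' : a ∈ closure (σ '' (I : Set A)) := by rw [hcl]; exact ha
    exact closure_minimal hsub hc ha'
  have h2 : Submodule.span ℂ {w : A | ∃ a ∈ I, ∃ b ∈ I, w = a * b} ≤ g.ker := by
    rw [Submodule.span_le]
    rintro _ ⟨a, ha, b, hb, rfl⟩
    exact h1 b hb a ha
  ext x
  have hx : (x : A) ∈ closure ((Submodule.span ℂ {w : A | ∃ a ∈ I, ∃ b ∈ I, w = a * b} :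
        Submodule ℂ A) : Set A) := by rw [hsp]; exact x.2
  have h3 : g x = 0 := closure_minimal (s := ((Submodule.span ℂ
    {w : A | ∃ a ∈ I, ∃ b ∈ I, w = a * b} : Submodule ℂ A) : Set A)) h2 g.isClosed_ker hx
  rw [← hg x, h3]; rfl

/-- The Leibniz rule for `a ↦ d (c a) (σ b w) - d c (σ a σ b w)`, where `b, c ∈ I` and `d` satisfies
the Leibniz rule on `I`. It combines the two expansions of `d (b a c a')`, grouped as `(b a) (c a')`
and `b (c a a')`, with those of `d (b c a)`, grouped as `b (c a)` and `c (b a)`. -/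
theorem derivation_identity {A : Type*} [NonUnitalRing A]
    (hcomm : ∀ a b : A, a * b = b * a)
    (σ : A → A) (hσ : ∀ a b : A, σ (a * b) = σ a * σ b) (I : Set A)
    (hI : ∀ a b : A, b ∈ I → a * b ∈ I) (hI' : ∀ a b : A, a ∈ I → a * b ∈ I)
    (d : A → A → ℂ)
    (hd : ∀ x ∈ I, ∀ y ∈ I, ∀ z ∈ I, d (x * y) z = d x (σ y * z) + d y (σ x * z))
    {b c w : A} (hb : b ∈ I) (hc : c ∈ I) (hw : w ∈ I) (a a' : A) :
    d (c * (a * a')) (σ b * w) - d c (σ (a * a') * (σ b * w))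
      = (d (c * a) (σ b * (σ a' * w)) - d c (σ a * (σ b * (σ a' * w))))
        + (d (c * a') (σ b * (σ a * w)) - d c (σ a' * (σ b * (σ a * w)))) := by
  have hlc : ∀ x y z : A, x * (y * z) = y * (x * z) := fun x y z => by
    rw [← mul_assoc, hcomm x y, mul_assoc]
  have h1 := hd (b * a) (hI' _ _ hb) (c * a') (hI' _ _ hc) w hw
  have h2 := hd b hb (c * (a * a')) (hI' _ _ hc) w hw
  have h3 := hd b hb (c * a) (hI' _ _ hc) (σ a' * w) (hI _ _ hw)
  have h4 := hd c hc (b * a) (hI' _ _ hb) (σ a' * w) (hI _ _ hw)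
  simp only [hσ, hcomm, hlc] at h1 h2 h3 h4 ⊢
  linear_combination h1 - h2 + h3 - h4

/-- Multiplication by an element `u` of the ideal `I`, as a bounded map `a ↦ u * a` from `A` to
`I`. -/
noncomputable def mulInto {A : Type*} [NonUnitalNormedRing A] [NormedSpace ℂ A]
    [IsScalarTower ℂ A A] [SMulCommClass ℂ A A] (I : Submodule ℂ A)
    (hI' : ∀ a b : A, a ∈ I → a * b ∈ I) (u : I) : A →L[ℂ] I :=
  (ContinuousLinearMap.mul ℂ A (u : A)).codRestrict I fun a => hI' _ a u.2

/-- Multiplication by an element `u` of `A`, as a bounded map `z ↦ u * z` from the ideal `I` to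
itself. -/
noncomputable def mulOn {A : Type*} [NonUnitalNormedRing A] [NormedSpace ℂ A]
    [IsScalarTower ℂ A A] [SMulCommClass ℂ A A] (I : Submodule ℂ A)
    (hI : ∀ a b : A, b ∈ I → a * b ∈ I) (u : A) : I →L[ℂ] I :=
  ((ContinuousLinearMap.mul ℂ A u).comp I.subtypeL).codRestrict I fun a => hI u a a.2


/-- `σ`-weak amenability of a Banach algebra `B`: every bounded `σ`-derivation
`D : B → B*` into the dual bimodule `B*` (with actions `(b·Λ)(x) = Λ(x b)`,
`(Λ·b)(x) = Λ(b x)`) is `σ`-inner. -/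
def SigmaWeaklyAmenable (B : Type u) [NonUnitalNormedRing B] [NormedSpace ℂ B]
    (s : B → B) : Prop :=
  ∀ D : B →L[ℂ] (B →L[ℂ] ℂ),
    (∀ a b x, D (a * b) x = D a (s b * x) + D b (x * s a)) →
    ∃ Λ : B →L[ℂ] ℂ, ∀ a x, D a x = Λ (x * s a) - Λ (s a * x)

/-- let `A` be a `σ`-weakly amenable commutative Banach algebra,
`I` a closed ideal of `A`, and `σ ∈ Hom(A)` with dense range such that the
closure of `σ(I)` is `I` (in particular `σ(I) ⊆ I`).  Then `I` is
`σ|_I`-weakly amenable if and only if the linear span of `I²` is dense in `I`.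
The `σ|_I`-weak amenability of the Banach algebra `I` is spelled out using the
multiplication and `σ` of `A` together with the ideal property. -/
theorem stmt16 {A : Type u} [NonUnitalNormedRing A] [NormedSpace ℂ A]
    [IsScalarTower ℂ A A] [SMulCommClass ℂ A A] [CompleteSpace A]
    (hcomm : ∀ a b : A, a * b = b * a)
    (σ : A →L[ℂ] A) (hσ : ∀ a b : A, σ (a * b) = σ a * σ b)
    (hdense : DenseRange σ) (hwa : SigmaWeaklyAmenable A σ)
    (I : Submodule ℂ A) (hIc : IsClosed (I : Set A))
    (hI : ∀ a b : A, b ∈ I → a * b ∈ I)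
    (hI' : ∀ a b : A, a ∈ I → a * b ∈ I)
    (hσI : ∀ a ∈ I, σ a ∈ I)
    (hcl : closure (σ '' (I : Set A)) = (I : Set A)) :
    ((∀ D : I →L[ℂ] (I →L[ℂ] ℂ),
        (∀ x y z : I, D ⟨(x : A) * (y : A), hI (x : A) (y : A) y.2⟩ z
          = D x ⟨σ (y : A) * (z : A), hI _ _ z.2⟩
            + D y ⟨(z : A) * σ (x : A), hI' _ _ z.2⟩) →
        ∃ Λ : I →L[ℂ] ℂ, ∀ x z : I,
          D x z = Λ ⟨(z : A) * σ (x : A), hI' _ _ z.2⟩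
            - Λ ⟨σ (x : A) * (z : A), hI _ _ z.2⟩) ↔
      closure ((Submodule.span ℂ {w : A | ∃ a ∈ I, ∃ b ∈ I, w = a * b} :
        Submodule ℂ A) : Set A) = (I : Set A)) := by
  have hlc : ∀ x y z : A, x * (y * z) = y * (x * z) := fun x y z => by
    rw [← mul_assoc, hcomm x y, mul_assoc]
  constructor
  · intro h
    have hle : Submodule.span ℂ {w : A | ∃ a ∈ I, ∃ b ∈ I, w = a * b} ≤ I := by
      rw [Submodule.span_le]
      rintro _ ⟨a, ha, b, hb, rfl⟩
      exact hI _ _ hb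
    refine Set.Subset.antisymm (closure_minimal hle hIc) fun p hp => ?_
    by_contra hpc
    obtain ⟨g, hg, hgp⟩ := exists_functional_of_notMem_closure _ hpc
    have hg' : ∀ a ∈ I, ∀ b ∈ I, g (a * b) = 0 := fun a ha b hb =>
      hg _ (Submodule.subset_span ⟨a, ha, b, hb, rfl⟩)
    let gI : I →L[ℂ] ℂ := g.comp I.subtypeL
    obtain ⟨Λ, hΛ⟩ := h (gI.smulRight gI) (by
      intro x y z
      simp [gI, hg' x x.2 y y.2, hg' _ (hσI y y.2) z z.2, hg' z z.2 _ (hσI x x.2)])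
    have h1 := hΛ ⟨p, hp⟩ ⟨p, hp⟩
    simp only [hcomm p (σ p), sub_self] at h1
    simp [gI, hgp] at h1
  · intro hsp D hD
    have vanish := eq_zero_of_vanish σ I hI hcl hsp
    suffices hD0 : D = 0 from ⟨0, by simp [hD0]⟩
    -- `d` is `D` as a total function on `A × A`, with junk value `0` off `I × I`.
    classical
    let d : A → A → ℂ := fun x z =>
      if h : x ∈ I ∧ z ∈ I then D ⟨x, h.1⟩ ⟨z, h.2⟩ else 0
    have hdD : ∀ x z : I, D x z = d x z := fun x z => by simp [d]
    have hd : ∀ x ∈ I, ∀ y ∈ I, ∀ z ∈ I,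
        d (x * y) z = d x (σ y * z) + d y (σ x * z) := by
      intro x hx y hy z hz
      have := hD ⟨x, hx⟩ ⟨y, hy⟩ ⟨z, hz⟩
      simp only [hdD] at this
      rw [this, hcomm z]
    have key : ∀ (b c z : I) (a x : A),
        d (c * a) (σ b * (z * x)) = d c (σ a * (σ b * (z * x))) := by
      intro b c z a x
      let w : I := ⟨σ b * z, hI _ _ z.2⟩
      let T : A →L[ℂ] (A →L[ℂ] ℂ) :=
        ((ContinuousLinearMap.compL ℂ A I ℂ).flip (mulInto I hI' w)).comp
            (D.comp (mulInto I hI' c))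
          - (ContinuousLinearMap.compL ℂ A A ℂ ((D c).comp (mulInto I hI' w))).comp
            ((ContinuousLinearMap.mul ℂ A).comp σ)
      have hT : ∀ a x, T a x = d (c * a) (σ b * (z * x)) - d c (σ a * (σ b * (z * x))) := by
        intro a x
        have : T a x = D (mulInto I hI' c a) (mulInto I hI' w x)
            - D c (mulInto I hI' w (σ a * x)) := rfl
        rw [this, hdD, hdD]
        change d (c * a) (σ b * z * x) - d c (σ b * z * (σ a * x)) = _
        rw [mul_assoc, mul_assoc]
        rw [hlc (z : A) (σ a), hlc (σ b) (σ a)]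
      obtain ⟨Λ, hΛ⟩ := hwa T (by
        intro a a' x
        rw [hT, hT, hT, derivation_identity hcomm σ hσ I hI hI' d hd b.2 c.2
          (hI' _ x z.2) a a', hcomm x (σ a), hlc (z : A), hlc (z : A)])
      have h1 := hΛ a x
      rw [hT, hcomm x, sub_self] at h1
      exact sub_eq_zero.1 h1
    have key2 : ∀ (c z : I) (a : A), d (c * a) z = d c (σ a * z) := by
      intro c z a
      let f : I →L[ℂ] ℂ := D (mulInto I hI' c a) - (D c).comp (mulOn I hI (σ a))
      have hf : ∀ z : I, f z = d (c * a) z - d c (σ a * z) := by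
        intro z
        have : f z = D (mulInto I hI' c a) z - D c (mulOn I hI (σ a) z) := rfl
        rw [this, hdD, hdD]
        rfl
      have hf0 : f = 0 := by
        refine vanish f fun b w => ?_
        have hfb : f.comp (mulOn I hI (σ b)) = 0 := by
          refine vanish _ fun y x => ?_
          have h1 := key b c ⟨σ y, hσI y y.2⟩ a x
          exact (hf ⟨σ b * (σ y * x), hI _ _ (hI _ _ x.2)⟩).trans (sub_eq_zero.2 h1)
        exact DFunLike.congr_fun hfb w
      have h2 := hf z
      rw [hf0] at h2
      exact sub_eq_zero.1 h2.symm
    ext a : 1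
    refine vanish _ fun c z => ?_
    rw [hdD]
    have h1 := hd c c.2 a a.2 z z.2
    rw [key2 c z a] at h1
    exact left_eq_add.1 h1
end
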